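/- (Nullity invariance under a κ-transform) Let w be a double occurrence word on n vertices, let a be a vertex, and let w∗ be the κ-transform of w at a. Let t be a transition assignment with t(a) = reverse, and define the transition assignment t∗ by: t∗(a) = follow; for every vertex v ≠ a interlaced with a in w, t∗(v) = cross if t(v) = reverse, t∗(v) = reverse if t(v) = cross, and t∗(v) = follow if t(v) = follow; and t∗(v) = t(v) for every vertex v ≠ a not interlaced with a in w. Then ν(I_t(w)) = ν(I_{t∗}(w∗)). -/

import Mathlib

/-!
Since `t(a) = reverse`, the matrix `I_t(w)` has a pivot `1` in the diagonal position `(a, a)`, and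
eliminating it does not change the nullity (`nullity_eq_of_pivot`). The claim is that the resulting
Schur complement is `I_{t∗}(w∗)`: its `(u, v)` entry is the old one plus `1` when both `u` and `v`
are interlaced with `a`. On the diagonal this is the exchange of `cross` and `reverse` at the
vertices interlaced with `a`. Off the diagonal it is `interlaced_kappaTransform`: reversing one of
the two arcs cut out by `a` toggles interlacement precisely between the vertices interlaced with
`a`. That fact is obtained by expressing interlacement through positions of occurrences
(`interlaced_iff`) and comparing the positions before and after the reversal.
-/

open scoped Classical

/-- The GF(2)-nullity of a square matrix: number of columns minus rank. -/
noncomputable def nullity {ι : Type*} [Fintype ι] (M : Matrix ι ι (ZMod 2)) : ℕ :=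
  Fintype.card ι - M.rank

/-- The setoid on `α` whose classes are the orbits (cycles, including fixed points)
of a permutation. -/
def sameCycleSetoid {α : Type*} (π : Equiv.Perm α) : Setoid α :=
  ⟨π.SameCycle, ⟨fun x => Equiv.Perm.SameCycle.refl π x, fun h => h.symm, fun h h' => h.trans h'⟩⟩

/-- The number of orbits of a permutation (fixed points count as orbits). -/
noncomputable def orbitCount {α : Type*} (π : Equiv.Perm α) : ℕ :=
  Nat.card (Quotient (sameCycleSetoid π))

/-- A double occurrence word on `n` vertices: a map from the `2n` cyclic positions to the
vertices in which every vertex occurs at exactly two positions. -/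
def DoubleOccurrence {n : ℕ} (w : Fin (2 * n) → Fin n) : Prop :=
  ∀ v : Fin n, (Finset.univ.filter fun p => w p = v).card = 2

/-- Distinct vertices `u` and `v` are interlaced in `w` when the two occurrences of `v` lie
in different cyclic arcs determined by the two occurrences of `u`; cutting the cycle at
position `0`, this says that exactly one occurrence of `v` lies strictly between the two
occurrences of `u`. -/
def Interlaced {n : ℕ} (w : Fin (2 * n) → Fin n) (u v : Fin n) : Prop :=
  u ≠ v ∧ ∀ p q : Fin (2 * n), p < q → w p = u → w q = u →
    (Finset.univ.filter fun r => p < r ∧ r < q ∧ w r = v).card = 1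

/-- The interlace matrix of a double occurrence word: the `(u,v)` entry is `1` iff `u ≠ v`
and `u`, `v` are interlaced; the diagonal entries are `0`. -/
noncomputable def interlaceMatrix {n : ℕ} (w : Fin (2 * n) → Fin n) :
    Matrix (Fin n) (Fin n) (ZMod 2) :=
  Matrix.of fun u v => if Interlaced w u v then 1 else 0

/-- A transition at a vertex: follow the word, cross it consistently with its orientation,
or reverse orientation. -/
inductive Transition : Type
  | follow : Transition
  | cross : Transition
  | reverse : Transition
deriving DecidableEq

/-- The matrix `I_t(w)`: delete the rows/columns of the vertices where `t` is `follow`,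
and put diagonal entry `1` at the vertices where `t` is `reverse` (and `0` where `t` is
`cross`); off-diagonal entries record interlacement in `w`. -/
noncomputable def transMatrix {n : ℕ} (w : Fin (2 * n) → Fin n) (t : Fin n → Transition) :
    Matrix {v : Fin n // t v ≠ Transition.follow} {v : Fin n // t v ≠ Transition.follow}
      (ZMod 2) :=
  Matrix.of fun u v =>
    if u = v then (if t u.1 = Transition.reverse then 1 else 0)
    else if Interlaced w u.1 v.1 then 1 else 0

/-- The position `1` in `Fin (2n)`, for `n ≥ 1`. -/
def pos1 {n : ℕ} (hn : 0 < n) : Fin (2 * n) := ⟨1, by omega⟩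

/-- `τ` is the dart permutation determined by the transition assignment `t` on the double
occurrence word `w`: darts are pairs `(p, ε)` with `ε = true` the traversal of the edge
`e_p` from `w(p)` to `w(p+1)` and `ε = false` its reverse, and for each vertex `v`
occurring at positions `a` and `b` the images of the four darts arriving at `v` are as
prescribed by `t v`. -/
def IsDartPerm {n : ℕ} (hn : 0 < n) (w : Fin (2 * n) → Fin n) (t : Fin n → Transition)
    (τ : Equiv.Perm (Fin (2 * n) × Bool)) : Prop :=
  ∀ (v : Fin n) (a b : Fin (2 * n)), a ≠ b → w a = v → w b = v →
    (t v = Transition.follow →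
      τ (a - pos1 hn, true) = (a, true) ∧ τ (b - pos1 hn, true) = (b, true) ∧
      τ (a, false) = (a - pos1 hn, false) ∧ τ (b, false) = (b - pos1 hn, false)) ∧
    (t v = Transition.cross →
      τ (a - pos1 hn, true) = (b, true) ∧ τ (b - pos1 hn, true) = (a, true) ∧
      τ (a, false) = (b - pos1 hn, false) ∧ τ (b, false) = (a - pos1 hn, false)) ∧
    (t v = Transition.reverse →
      τ (a - pos1 hn, true) = (b - pos1 hn, false) ∧ τ (b - pos1 hn, true) = (a - pos1 hn, false) ∧
      τ (a, false) = (b, true) ∧ τ (b, false) = (a, true))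

/-- The κ-transform of `w` at the vertex occurring at positions `0` and `m`: the arc of `w`
strictly between position `m` and position `0` is reversed, i.e. `w∗(i) = w(i)` for
`i ≤ m` and `w∗(i) = w(2n + m − i)` for `m < i < 2n`. -/
def kappaTransform {n : ℕ} (w : Fin (2 * n) → Fin n) (m : ℕ) : Fin (2 * n) → Fin n :=
  fun i =>
    if (i : ℕ) ≤ m then w i
    else w ⟨(2 * n + m - (i : ℕ)) % (2 * n), Nat.mod_lt _ (by have := i.isLt; omega)⟩

/-- Interlacement in terms of chosen occurrences `p`, `q` of `u` and `r`, `s` of `v`, in either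
order: exactly one of `r`, `s` lies strictly between `p` and `q`. -/
theorem interlaced_iff {n : ℕ} {w : Fin (2 * n) → Fin n} (hw : DoubleOccurrence w)
    {u v : Fin n} (huv : u ≠ v) {p q r s : Fin (2 * n)} (hpq : p ≠ q) (hrs : r ≠ s)
    (hp : w p = u) (hq : w q = u) (hr : w r = v) (hs : w s = v) :
    Interlaced w u v ↔ ((min p.1 q.1 < r.1 ∧ r.1 < max p.1 q.1) ↔
      ¬ (min p.1 q.1 < s.1 ∧ s.1 < max p.1 q.1)) := by
  have key : ∀ {x : Fin n} {i j : Fin (2 * n)}, i ≠ j → w i = x → w j = x →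
      ∀ k, w k = x ↔ k = i ∨ k = j := by
    intro x i j hij hi hj k
    have h2 : ({i, j} : Finset (Fin (2 * n))) = Finset.univ.filter fun p => w p = x := by
      apply Finset.eq_of_subset_of_card_le
      · intro y hy
        simp only [Finset.mem_insert, Finset.mem_singleton] at hy
        rcases hy with rfl | rfl <;> simpa
      · rw [hw x, Finset.card_pair hij]
    have := Finset.ext_iff.1 h2 k
    simpa using this.symm
  have hu := key hpq hp hq
  have hv := key hrs hr hs
  have count : ∀ i j : Fin (2 * n),
      (Finset.univ.filter fun k => i < k ∧ k < j ∧ w k = v).card = 1 ↔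
        ((i < r ∧ r < j) ↔ ¬ (i < s ∧ s < j)) := by
    intro i j
    have e : (Finset.univ.filter fun k => i < k ∧ k < j ∧ w k = v)
        = ({r, s} : Finset (Fin (2 * n))).filter fun k => i < k ∧ k < j := by
      ext k
      simp only [Finset.mem_filter, Finset.mem_univ, true_and, Finset.mem_insert,
        Finset.mem_singleton, hv]
      tauto
    rw [e, Finset.filter_insert, Finset.filter_singleton]
    by_cases h1 : i < r ∧ r < j <;> by_cases h2 : i < s ∧ s < j <;>
      simp [h1, h2, Finset.card_pair hrs]
  unfold Interlaced
  simp only [count, hu]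
  constructor
  · rintro ⟨-, h⟩
    rcases lt_or_gt_of_ne hpq with h' | h'
    · have := h p q h' (Or.inl rfl) (Or.inr rfl)
      rw [Fin.lt_def] at h'
      simp only [Fin.lt_def] at this
      rwa [min_eq_left h'.le, max_eq_right h'.le]
    · have := h q p h' (Or.inr rfl) (Or.inl rfl)
      rw [Fin.lt_def] at h'
      simp only [Fin.lt_def] at this
      rwa [min_eq_right h'.le, max_eq_left h'.le]
  · intro h
    refine ⟨huv, ?_⟩
    rintro i j hij (rfl | rfl) (rfl | rfl)
    · exact absurd hij (lt_irrefl _)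
    · rw [Fin.lt_def] at hij
      rw [min_eq_left hij.le, max_eq_right hij.le] at h
      simpa only [Fin.lt_def] using h
    · rw [Fin.lt_def] at hij
      rw [min_eq_right hij.le, max_eq_left hij.le] at h
      simpa only [Fin.lt_def] using h
    · exact absurd hij (lt_irrefl _)

theorem exists_occurrences {n : ℕ} {w : Fin (2 * n) → Fin n} (hw : DoubleOccurrence w)
    (v : Fin n) : ∃ p q : Fin (2 * n), p < q ∧ w p = v ∧ w q = v := by
  obtain ⟨p, q, hpq, h⟩ := Finset.card_eq_two.1 (hw v)
  have hp : p ∈ Finset.univ.filter fun p => w p = v := by simp [h]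
  have hq : q ∈ Finset.univ.filter fun p => w p = v := by simp [h]
  simp only [Finset.mem_filter, Finset.mem_univ, true_and] at hp hq
  rcases lt_or_gt_of_ne hpq with h' | h'
  · exact ⟨p, q, h', hp, hq⟩
  · exact ⟨q, p, h', hq, hp⟩

theorem Interlaced.comm {n : ℕ} {w : Fin (2 * n) → Fin n} (hw : DoubleOccurrence w)
    {u v : Fin n} (huv : u ≠ v) : Interlaced w u v ↔ Interlaced w v u := by
  obtain ⟨p, q, hpq, hp, hq⟩ := exists_occurrences hw u
  obtain ⟨r, s, hrs, hr, hs⟩ := exists_occurrences hw v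
  rw [interlaced_iff hw huv hpq.ne hrs.ne hp hq hr hs,
    interlaced_iff hw huv.symm hrs.ne hpq.ne hr hs hp hq]
  have h1 : p ≠ r := by rintro rfl; exact huv (hp.symm.trans hr)
  have h2 : p ≠ s := by rintro rfl; exact huv (hp.symm.trans hs)
  have h3 : q ≠ r := by rintro rfl; exact huv (hq.symm.trans hr)
  have h4 : q ≠ s := by rintro rfl; exact huv (hq.symm.trans hs)
  simp only [ne_eq, Fin.ext_iff, Fin.lt_def] at *
  omega

/-- The involution of positions underlying the κ-transform at positions `0` and `m`: it fixes
`0, …, m` and sends `i > m` to `2n + m - i`, so that `w∗ = w ∘ kappaPos`. -/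
def kappaPos {n m : ℕ} (_hm : m < 2 * n) (i : Fin (2 * n)) : Fin (2 * n) :=
  if h : (i : ℕ) ≤ m then i else ⟨2 * n + m - i, by omega⟩

theorem kappaPos_val {n m : ℕ} (hm : m < 2 * n) (i : Fin (2 * n)) :
    (kappaPos hm i : ℕ) = if (i : ℕ) ≤ m then (i : ℕ) else 2 * n + m - i := by
  unfold kappaPos
  split_ifs <;> rfl

theorem kappaPos_involutive {n m : ℕ} (hm : m < 2 * n) :
    Function.Involutive (kappaPos (n := n) hm) := by
  intro i
  apply Fin.ext
  have := i.isLt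
  simp only [kappaPos_val]
  split_ifs <;> omega

theorem kappaTransform_apply {n m : ℕ} (hm : m < 2 * n) (w : Fin (2 * n) → Fin n)
    (i : Fin (2 * n)) : kappaTransform w m i = w (kappaPos hm i) := by
  unfold kappaTransform
  split_ifs with h
  · simp [kappaPos, h]
  · congr 1
    apply Fin.ext
    rw [kappaPos_val, if_neg h]
    exact Nat.mod_eq_of_lt (by omega)

theorem kappaTransform_doubleOccurrence {n m : ℕ} (hm : m < 2 * n) {w : Fin (2 * n) → Fin n}
    (hw : DoubleOccurrence w) : DoubleOccurrence (kappaTransform w m) := by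
  intro v
  refine Eq.trans ?_ (hw v)
  refine Finset.card_bij' (fun i _ => kappaPos hm i) (fun i _ => kappaPos hm i) ?_ ?_ ?_ ?_
  · intro i hi; simpa [kappaTransform_apply hm] using hi
  · intro i hi; simpa [kappaTransform_apply hm, kappaPos_involutive hm i] using hi
  · intro i _; exact kappaPos_involutive hm i
  · intro i _; exact kappaPos_involutive hm i

/-- Away from `a`, the κ-transform toggles interlacement exactly between pairs of vertices both
interlaced with `a`: reversing an arc swaps the order of two points on it and nothing else. -/
theorem interlaced_kappaTransform {n m : ℕ} (hm0 : 0 < m) (hm : m < 2 * n)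
    {w : Fin (2 * n) → Fin n} (hw : DoubleOccurrence w) {a : Fin n}
    (h0 : w ⟨0, Nat.lt_trans hm0 hm⟩ = a) (hma : w ⟨m, hm⟩ = a)
    {u v : Fin n} (huv : u ≠ v) (hua : u ≠ a) (hva : v ≠ a) :
    Interlaced (kappaTransform w m) u v ↔
      ¬ (Interlaced w u v ↔ (Interlaced w u a ∧ Interlaced w v a)) := by
  obtain ⟨p, q, hpq, hp, hq⟩ := exists_occurrences hw u
  obtain ⟨r, s, hrs, hr, hs⟩ := exists_occurrences hw v
  have hz : (⟨0, Nat.lt_trans hm0 hm⟩ : Fin (2 * n)) ≠ ⟨m, hm⟩ := by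
    simp only [ne_eq, Fin.mk.injEq]; omega
  have inj := (kappaPos_involutive (n := n) hm).injective
  have ap : ∀ i, kappaTransform w m (kappaPos hm i) = w i := fun i => by
    rw [kappaTransform_apply hm, kappaPos_involutive hm i]
  rw [interlaced_iff (kappaTransform_doubleOccurrence hm hw) huv (inj.ne hpq.ne) (inj.ne hrs.ne)
      ((ap p).trans hp) ((ap q).trans hq) ((ap r).trans hr) ((ap s).trans hs),
    interlaced_iff hw huv hpq.ne hrs.ne hp hq hr hs,
    Interlaced.comm hw hua, Interlaced.comm hw hva,
    interlaced_iff hw hua.symm hz hpq.ne h0 hma hp hq,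
    interlaced_iff hw hva.symm hz hrs.ne h0 hma hr hs]
  have ne : ∀ {i j : Fin (2 * n)} {x y : Fin n}, x ≠ y → w i = x → w j = y → (i : ℕ) ≠ j := by
    intro i j x y hxy hi hj h
    exact hxy (hi.symm.trans ((congrArg w (Fin.ext h)).trans hj))
  have := ne huv hp hr
  have := ne huv hp hs
  have := ne huv hq hr
  have := ne huv hq hs
  have := ne hua hp h0
  have := ne hua hq h0
  have := ne hva hr h0
  have := ne hva hs h0
  have := ne hua hp hma
  have := ne hua hq hma
  have := ne hva hr hma
  have := ne hva hs hma
  rw [Fin.lt_def] at hpq hrs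
  have := p.isLt
  have := q.isLt
  have := r.isLt
  have := s.isLt
  simp only [kappaPos_val] at *
  clear ap inj ne hz h0 hma hp hq hr hs hua hva huv hw
  generalize (p : ℕ) = p' at *
  generalize (q : ℕ) = q' at *
  generalize (r : ℕ) = r' at *
  generalize (s : ℕ) = s' at *
  rw [min_eq_left hpq.le, max_eq_right hpq.le, min_eq_left hm0.le, max_eq_right hm0.le]
  split_ifs <;> omega

theorem nullity_eq_finrank_ker {ι : Type*} [Fintype ι] (M : Matrix ι ι (ZMod 2)) :
    nullity M = Module.finrank (ZMod 2) (LinearMap.ker M.mulVecLin) := by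
  have h := LinearMap.finrank_range_add_finrank_ker M.mulVecLin
  rw [Module.finrank_fintype_fun_eq_card] at h
  unfold nullity Matrix.rank
  omega

/-- Eliminating a pivot `1`, at the index `e none`, leaves a Schur complement `N` of the same
nullity; signs are immaterial over GF(2). The pivot row of `M x = 0` determines the pivot
coordinate of `x` from the others, so forgetting that coordinate identifies the two kernels. -/
theorem nullity_eq_of_pivot {ι κ : Type*} [Fintype ι] [Fintype κ] (e : Option κ ≃ ι)
    (M : Matrix ι ι (ZMod 2)) (N : Matrix κ κ (ZMod 2)) (hpivot : M (e none) (e none) = 1)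
    (hN : ∀ k l, N k l = M (e (some k)) (e (some l)) +
      M (e (some k)) (e none) * M (e none) (e (some l))) :
    nullity M = nullity N := by
  rw [nullity_eq_finrank_ker, nullity_eq_finrank_ker]
  have memM : ∀ x : ι → ZMod 2, x ∈ LinearMap.ker M.mulVecLin ↔
      (x (e none) = ∑ l, M (e none) (e (some l)) * x (e (some l))) ∧
      ∀ k, M (e (some k)) (e none) * x (e none) +
        ∑ l, M (e (some k)) (e (some l)) * x (e (some l)) = 0 := by
    intro x
    rw [LinearMap.mem_ker, funext_iff, ← e.forall_congr_right]
    simp only [Matrix.mulVecLin_apply, Matrix.mulVec, dotProduct, Pi.zero_apply,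
      ← e.sum_comp (fun j => M _ j * x j), Fintype.sum_option, Option.forall, hpivot, one_mul]
    rw [CharTwo.add_eq_zero]
  have memN : ∀ y : κ → ZMod 2, y ∈ LinearMap.ker N.mulVecLin ↔
      ∀ k, M (e (some k)) (e none) * (∑ l, M (e none) (e (some l)) * y l) +
        ∑ l, M (e (some k)) (e (some l)) * y l = 0 := by
    intro y
    rw [LinearMap.mem_ker, funext_iff]
    simp only [Matrix.mulVecLin_apply, Matrix.mulVec, dotProduct, Pi.zero_apply, hN, add_mul,
      Finset.sum_add_distrib, Finset.mul_sum, mul_assoc]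
    simp only [add_comm]
  refine LinearEquiv.finrank_eq (LinearEquiv.ofBijective
    (((LinearMap.funLeft (ZMod 2) (ZMod 2) (fun k => e (some k))).comp
      (LinearMap.ker M.mulVecLin).subtype).codRestrict (LinearMap.ker N.mulVecLin) ?_) ⟨?_, ?_⟩)
  · rintro ⟨x, hx⟩
    obtain ⟨h1, h2⟩ := (memM x).1 hx
    rw [memN]
    intro k
    simpa [LinearMap.funLeft_apply, ← h1] using h2 k
  · rintro ⟨x, hx⟩ ⟨x', hx'⟩ h
    have h' : ∀ k, x (e (some k)) = x' (e (some k)) := fun k =>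
      congrFun (congrArg Subtype.val h) k
    apply Subtype.ext
    funext i
    obtain ⟨_ | k, rfl⟩ := e.surjective i
    · show x _ = x' _
      rw [((memM x).1 hx).1, ((memM x').1 hx').1]
      simp only [h']
    · exact h' k
  · rintro ⟨y, hy⟩
    refine ⟨⟨fun i => (e.symm i).elim (∑ l, M (e none) (e (some l)) * y l) y, ?_⟩, ?_⟩
    · rw [memM]
      simpa using (memN y).1 hy
    · apply Subtype.ext
      funext k
      simp [LinearMap.funLeft_apply]

/-- **Nullity invariance under a κ-transform.** Let `w` be a double occurrence word, `a` a
vertex occurring at positions `0` and `m`, and `w∗` the κ-transform of `w` at `a`. Let `t`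
be a transition assignment with `t(a) = reverse` and let `t∗` be given by `t∗(a) = follow`,
`t∗` exchanging `cross` and `reverse` (and fixing `follow`) at the vertices interlaced with
`a` in `w`, and `t∗ = t` at the remaining vertices. Then `ν(I_t(w)) = ν(I_{t∗}(w∗))`. -/
theorem kappaTransform_nullity_invariance {n : ℕ} (w : Fin (2 * n) → Fin n)
    (hw : DoubleOccurrence w) (a : Fin n) (m : ℕ) (hm0 : 0 < m) (hm : m < 2 * n)
    (h0 : w ⟨0, Nat.lt_trans hm0 hm⟩ = a) (hma : w ⟨m, hm⟩ = a)
    (t t' : Fin n → Transition) (hta : t a = Transition.reverse)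
    (ht'a : t' a = Transition.follow)
    (ht'int : ∀ v : Fin n, v ≠ a → Interlaced w v a →
      t' v = (match t v with
        | Transition.reverse => Transition.cross
        | Transition.cross => Transition.reverse
        | Transition.follow => Transition.follow))
    (ht'nonint : ∀ v : Fin n, v ≠ a → ¬ Interlaced w v a → t' v = t v) :
    nullity (transMatrix w t) = nullity (transMatrix (kappaTransform w m) t') := by
  have hfollow : ∀ v, v ≠ a → (t' v ≠ Transition.follow ↔ t v ≠ Transition.follow) := by
    intro v hv
    by_cases hi : Interlaced w v a
    · rw [ht'int v hv hi]
      cases t v <;> simp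
    · rw [ht'nonint v hv hi]
  have hne : ∀ k : {v // t' v ≠ Transition.follow}, k.1 ≠ a := fun k h => k.2 (h ▸ ht'a)
  let f : Option {v // t' v ≠ Transition.follow} → {v // t v ≠ Transition.follow} := fun o =>
    o.elim ⟨a, by simp [hta]⟩ fun k => ⟨k.1, (hfollow k.1 (hne k)).1 k.2⟩
  -- Hence the rows of the first matrix are those of the second together with the pivot row `a`.
  have hf : Function.Bijective f := by
    constructor
    · rintro (_ | k) (_ | l) h
      · rfl
      · exact absurd (congrArg Subtype.val h).symm (hne l)
      · exact absurd (congrArg Subtype.val h) (hne k)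
      · exact congrArg some (Subtype.ext (congrArg Subtype.val h :))
    · rintro ⟨v, hv⟩
      by_cases hva : v = a
      · exact ⟨none, Subtype.ext hva.symm⟩
      · exact ⟨some ⟨v, (hfollow v hva).2 hv⟩, rfl⟩
  refine nullity_eq_of_pivot (Equiv.ofBijective f hf) _ _ ?_ ?_
  · simp [transMatrix, f, hta]
  · rintro ⟨k, hk⟩ ⟨l, hl⟩
    have hka : k ≠ a := hne ⟨k, hk⟩
    have hla : l ≠ a := hne ⟨l, hl⟩
    have htwo : (1 : ZMod 2) + 1 = 0 := rfl
    simp only [transMatrix, Matrix.of_apply, Equiv.ofBijective_apply, f, Option.elim,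
      Subtype.mk.injEq, hka, hla.symm, if_false, Interlaced.comm hw hla.symm]
    by_cases hkl : k = l
    · subst hkl
      by_cases hi : Interlaced w k a
      · have ht := ht'int k hka hi
        have hc : t k = Transition.reverse ∨ t k = Transition.cross := by
          have := (hfollow k hka).1 hk
          revert this
          cases t k <;> simp
        rcases hc with h | h <;> rw [h] at ht <;> simp [hi, ht, h, htwo]
      · simp [hi, ht'nonint k hka hi]
    · rw [interlaced_kappaTransform hm0 hm hw h0 hma hkl hka hla]
      by_cases h1 : Interlaced w k l <;> by_cases h2 : Interlaced w k a <;>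
        by_cases h3 : Interlaced w l a <;> simp [hkl, h1, h2, h3, htwo]
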